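/- There exist constants c > 0 and γ₀ > 0 such that for all γ = N^{−1/2} ≤ γ₀ and all ω ∈ Λ_N, the Fourier transform of the macroscopic Kac kernel satisfies 1 − K̂_γ(ω) ≥ c · min(γ²|ω|², 1). -/

import Mathlib

open scoped BigOperators ENNReal
open MeasureTheory

noncomputable section

namespace IsingKac

/-- The periodic lattice `Λ_N = {1-N, …, N}²`, realised as `(ℤ/2Nℤ)²`. -/
abbrev Lat (N : ℕ) : Type := ZMod (2*N) × ZMod (2*N)

instance latNeZero (N : ℕ) [NeZero N] : NeZero (2*N) := ⟨by have := NeZero.ne N; omega⟩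

/-- The representative of `v ∈ ℤ/2Nℤ` lying in `{1-N, …, N}`. -/
def latRep (N : ℕ) (v : ZMod (2*N)) : ℤ :=
  if (v.val : ℤ) ≤ (N : ℤ) then (v.val : ℤ) else (v.val : ℤ) - 2*N

def latRep2 (N : ℕ) (z : Lat N) : ℤ × ℤ := (latRep N z.1, latRep N z.2)

/-- The character `e_w(x) = exp(iπ w·x)`. -/
def eW (w : ℤ × ℤ) (x : ℝ × ℝ) : ℂ :=
  Complex.exp ((Real.pi : ℂ) * Complex.I * ((w.1 : ℂ) * (x.1 : ℂ) + (w.2 : ℂ) * (x.2 : ℂ)))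

/-- The point `ε z ∈ Λ_ε ⊂ 𝕋²` corresponding to `z ∈ Λ_N` (with `ε = 1/N`). -/
def latPt (N : ℕ) (z : Lat N) : ℝ × ℝ :=
  ((latRep N z.1 : ℝ) / N, (latRep N z.2 : ℝ) / N)

/-- Discrete Fourier coefficient `f̂(w) = Σ_{x ∈ Λ_ε} ε² f(x) e^{-iπ w·x}`. -/
def dFT (N : ℕ) [NeZero N] (f : Lat N → ℂ) (w : ℤ × ℤ) : ℂ :=
  ∑ z : Lat N, ((N : ℂ)^2)⁻¹ * f z * (starRingEnd ℂ) (eW w (latPt N z))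

/-- The extension operator `(Ex f)(x) = (1/4) Σ_{w ∈ Λ_N} f̂(w) e^{iπ w·x}` for `x ∈ 𝕋²`. -/
def Ex (N : ℕ) [NeZero N] (f : Lat N → ℂ) (x : ℝ × ℝ) : ℂ :=
  (1/4 : ℂ) * ∑ z : Lat N, dFT N f (latRep2 N z) * eW (latRep2 N z) x

/-- Discrete `L^p` norm on `Λ_ε`, `p ∈ [1,∞]`. -/
def dLp (N : ℕ) [NeZero N] (p : ℝ≥0∞) {E : Type*} [NormedAddCommGroup E]
    (f : Lat N → E) : ℝ :=
  if p = ∞ then ⨆ z : Lat N, ‖f z‖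
  else (∑ z : Lat N, ((N : ℝ)^2)⁻¹ * ‖f z‖ ^ p.toReal) ^ (1/p.toReal)

/-- Fundamental domain of the torus `𝕋² = [-1,1]²`. -/
def box : Set (ℝ × ℝ) := Set.Icc (-1 : ℝ) 1 ×ˢ Set.Icc (-1 : ℝ) 1

/-- `L^p(𝕋²)` norm, `p ∈ [1,∞]`. -/
def cLp (p : ℝ≥0∞) {E : Type*} [NormedAddCommGroup E] (g : ℝ × ℝ → E) : ℝ≥0∞ :=
  eLpNorm g p (volume.restrict box)

/-- Euclidean norm on `ℝ²`. -/
def enorm2 (r : ℝ × ℝ) : ℝ := Real.sqrt (r.1^2 + r.2^2)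

/-- A Littlewood–Paley partition of unity `(χ̃, χ)` on `ℝ²`. -/
structure LPpartition : Type where
  chit : ℝ × ℝ → ℝ
  chi : ℝ × ℝ → ℝ
  cont_t : Continuous chit
  cont : Continuous chi
  mem_t : ∀ r, chit r ∈ Set.Icc (0:ℝ) 1
  mem : ∀ r, chi r ∈ Set.Icc (0:ℝ) 1
  supp_t : ∀ r : ℝ × ℝ, 4/3 < enorm2 r → chit r = 0
  supp : ∀ r : ℝ × ℝ, enorm2 r < 3/4 ∨ 8/3 < enorm2 r → chi r = 0
  partition : ∀ r : ℝ × ℝ, chit r + ∑' k : ℕ, chi ((2:ℝ)^(-(k:ℤ)) • r) = 1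

/-- `χ_k`, for `k ≥ -1`. -/
def LPchi (P : LPpartition) (k : ℤ) : ℝ × ℝ → ℝ :=
  if k = -1 then P.chit else fun r => P.chi ((2:ℝ)^(-k) • r)

/-- The Littlewood–Paley block `δ_k (Ex f)` of (the extension of) a lattice function. -/
def dBlock (N : ℕ) [NeZero N] (P : LPpartition) (k : ℤ) (f : Lat N → ℂ) (x : ℝ × ℝ) : ℂ :=
  (1/4 : ℂ) * ∑ z : Lat N,
    ((LPchi P k ((latRep N z.1 : ℝ), (latRep N z.2 : ℝ)) : ℝ) : ℂ) *
      dFT N f (latRep2 N z) * eW (latRep2 N z) x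

/-- Discrete Besov norm `‖f‖_{B^ν_{p,q}(Λ_ε)}`. -/
def dBesov (N : ℕ) [NeZero N] (P : LPpartition) (ν : ℝ) (p q : ℝ≥0∞) (f : Lat N → ℂ) : ℝ :=
  if q = ∞ then
    ⨆ k : ℕ, (2:ℝ)^(ν * ((k:ℝ) - 1)) * dLp N p (fun z => dBlock N P ((k:ℤ)-1) f (latPt N z))
  else
    (∑' k : ℕ, ((2:ℝ)^(ν * ((k:ℝ) - 1)) *
      dLp N p (fun z => dBlock N P ((k:ℤ)-1) f (latPt N z))) ^ q.toReal) ^ (1/q.toReal)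

/-- The `C^{-ν}` (Besov–Hölder) norm of the extension `Ex f`:
`sup_{k ≥ -1} 2^{-νk} ‖δ_k (Ex f)‖_{L^∞(𝕋²)}`. -/
def holderNeg (N : ℕ) [NeZero N] (P : LPpartition) (ν : ℝ) (f : Lat N → ℂ) : ℝ :=
  ⨆ k : ℕ, (2:ℝ)^(-ν * ((k:ℝ) - 1)) * ⨆ x : ℝ × ℝ, ‖dBlock N P ((k:ℤ)-1) f x‖

/-- Spin values. -/
def spin (s : Bool) : ℝ := if s then 1 else -1

/-- Hamiltonian `H(σ) = (β/2) Σ_{x,y} k(x-y) σ_x σ_y + b Σ_x σ_x`. -/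
def hamil (N : ℕ) [NeZero N] (kk : Lat N → ℝ) (β b : ℝ) (σ : Lat N → ℝ) : ℝ :=
  β/2 * ∑ x : Lat N, ∑ y : Lat N, kk (x - y) * σ x * σ y + b * ∑ x : Lat N, σ x

/-- Gibbs expectation `E^γ_{β,b}[F]`. -/
def gibbsE (N : ℕ) [NeZero N] (kk : Lat N → ℝ) (β b : ℝ) (F : (Lat N → ℝ) → ℝ) : ℝ :=
  (∑ s : Lat N → Bool, Real.exp (hamil N kk β b (fun x => spin (s x))) * F (fun x => spin (s x))) /
  (∑ s : Lat N → Bool, Real.exp (hamil N kk β b (fun x => spin (s x))))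

/-- The profile `𝔎 : ℝ² → [0,1]`, twice differentiable, radial, supported in `B(0,3)`,
not identically zero. -/
structure KacProfile : Type where
  f : ℝ × ℝ → ℝ
  smooth : ContDiff ℝ 2 f
  mem : ∀ x, f x ∈ Set.Icc (0:ℝ) 1
  radial : ∀ x y : ℝ × ℝ, enorm2 x = enorm2 y → f x = f y
  supp : ∀ x : ℝ × ℝ, 3 < enorm2 x → f x = 0
  nontriv : ∃ x, f x ≠ 0

/-- The Kac kernel `k_γ(z) = c γ² 𝔎(γ·z)` (shortest periodic representative), `k_γ(0)=0`. -/
def kGamma (𝔎 : KacProfile) (N : ℕ) (c γ : ℝ) (z : Lat N) : ℝ :=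
  if z = 0 then 0 else c * γ^2 * 𝔎.f (γ * (latRep N z.1 : ℝ), γ * (latRep N z.2 : ℝ))

/-- `γ = N^{-1/2}`, so that `γ² = ε = 1/N`. -/
def gam (N : ℕ) : ℝ := Real.sqrt ((N : ℝ)⁻¹)

/-- Fourier transform `K̂_γ(ω) = Σ_z k_γ(z) e^{-iπ ω·(εz)}` of the macroscopic kernel
(real, since the kernel is even). -/
def kHat (N : ℕ) [NeZero N] (kk : Lat N → ℝ) (ω : ℤ × ℤ) : ℝ :=
  ∑ z : Lat N, kk z *
    Real.cos (Real.pi * ((ω.1 : ℝ) * (latRep N z.1 : ℝ) / N + (ω.2 : ℝ) * (latRep N z.2 : ℝ) / N))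

/-- The renormalisation constant
`𝔠_γ = (1/4) Σ_{ω ∈ Λ_N \ {0}} |K̂_γ(ω)|² / (γ^{-2} (1-K̂_γ(ω)))`. -/
def cGamma (N : ℕ) [NeZero N] (kk : Lat N → ℝ) (γ : ℝ) : ℝ :=
  (1/4) * ∑ z : Lat N, if z = (0 : Lat N) then 0 else
    (kHat N kk (latRep2 N z))^2 / ((γ^2)⁻¹ * (1 - kHat N kk (latRep2 N z)))

/-- Critical inverse temperature `β = 1 + γ²(𝔠_γ + A)`. -/
def betaCrit (𝔎 : KacProfile) (N : ℕ) [NeZero N] (c A : ℝ) : ℝ :=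
  1 + (gam N)^2 * (cGamma N (kGamma 𝔎 N c (gam N)) (gam N) + A)

/-- The fluctuation field `X_γ(x) = γ^{-1} Σ_z k_γ(ε^{-1}x - z) σ_z`, as a function on `Λ_N`. -/
def fluct (N : ℕ) [NeZero N] (kk : Lat N → ℝ) (γ : ℝ) (σ : Lat N → ℝ) (z : Lat N) : ℝ :=
  γ⁻¹ * ∑ y : Lat N, kk (z - y) * σ y

/-- The rescaled step field `γ^{-1} σ_{⌊ε^{-1}x⌋}` on the torus (without the `γ^{-1}`). -/
def stepField (N : ℕ) (σ : Lat N → ℝ) (x : ℝ × ℝ) : ℝ :=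
  σ (((⌊(N : ℝ) * x.1⌋ : ℤ) : ZMod (2*N)), ((⌊(N : ℝ) * x.2⌋ : ℤ) : ZMod (2*N)))

/-- Fourier coefficient on the torus: `ĝ(ω) = ∫_{𝕋²} g(x) e^{-iπω·x} dx`. -/
def cFT (g : ℝ × ℝ → ℂ) (ω : ℤ × ℤ) : ℂ :=
  ∫ x in box, g x * (starRingEnd ℂ) (eW ω x)


/-! ### Additional definitions -/

/-- Nearest-neighbour Dirichlet sum `Σ_{x,y ∈ Λ_ε, |x-y|=ε} ε² (f(y)-f(x))²`. -/
def nnSum (N : ℕ) [NeZero N] (f : Lat N → ℝ) : ℝ :=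
  ∑ x : Lat N, ((N : ℝ)^2)⁻¹ *
    ((f (x + (1, 0)) - f x)^2 + (f (x + (0, 1)) - f x)^2 +
     (f (x - (1, 0)) - f x)^2 + (f (x - (0, 1)) - f x)^2)

/-- The `d`-dimensional periodic lattice `Λ_N^d`. -/
abbrev LatD (d N : ℕ) : Type := Fin d → ZMod (2*N)

/-- Discrete `L^p` norm on `Λ_ε^d`, `p ∈ [1,∞]`. -/
def dLpD (d N : ℕ) [NeZero N] (p : ℝ≥0∞) (f : LatD d N → ℂ) : ℝ :=
  if p = ∞ then ⨆ z : LatD d N, ‖f z‖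
  else (∑ z : LatD d N, ((N : ℝ)^d)⁻¹ * ‖f z‖ ^ p.toReal) ^ (1/p.toReal)

/-- `Σ_{w ∈ Λ_N^d} χ(λ w) e_w`, evaluated at the lattice point `ε z ∈ Λ_ε^d`. -/
def gLam (d N : ℕ) [NeZero N] (χ : (Fin d → ℝ) → ℝ) (lam : ℝ) (z : LatD d N) : ℂ :=
  ∑ w : LatD d N, ((χ (fun i => lam * (latRep N (w i) : ℝ)) : ℝ) : ℂ) *
    Complex.exp ((Real.pi : ℂ) * Complex.I *
      ((∑ i : Fin d, (latRep N (w i) : ℝ) * ((latRep N (z i) : ℝ) / N) : ℝ) : ℂ))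

/-- Second partial derivative of `φ` in directions `v, w`. -/
def pd2 (φ : ℝ × ℝ → ℝ) (v w : ℝ × ℝ) : ℝ × ℝ → ℝ :=
  fun x => fderiv ℝ (fun y => fderiv ℝ φ y v) x w

/-- `max_{i,j ∈ {1,2}} ‖∂_i ∂_j φ‖_{L^∞}`. -/
def secondDerivBound (φ : ℝ × ℝ → ℝ) : ℝ :=
  max (max (⨆ x : ℝ × ℝ, |pd2 φ (1,0) (1,0) x|) (⨆ x : ℝ × ℝ, |pd2 φ (1,0) (0,1) x|))
      (max (⨆ x : ℝ × ℝ, |pd2 φ (0,1) (1,0) x|) (⨆ x : ℝ × ℝ, |pd2 φ (0,1) (0,1) x|))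

/-- The Littlewood–Paley block `δ_k g` of a function on the torus. -/
def cBlock (P : LPpartition) (k : ℤ) (g : ℝ × ℝ → ℂ) (x : ℝ × ℝ) : ℂ :=
  (1/4 : ℂ) * ∑' ω : ℤ × ℤ, ((LPchi P k ((ω.1 : ℝ), (ω.2 : ℝ)) : ℝ) : ℂ) * cFT g ω * eW ω x

/-- Besov norm `‖g‖_{B^ν_{1,1}(𝕋²)} = Σ_{k ≥ -1} 2^{νk} ‖δ_k g‖_{L¹(𝕋²)}`. -/
def cBesov11 (P : LPpartition) (ν : ℝ) (g : ℝ × ℝ → ℂ) : ℝ :=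
  ∑' k : ℕ, (2:ℝ) ^ (ν * ((k:ℝ) - 1)) * ∫ x in box, ‖cBlock P ((k:ℤ)-1) g x‖

open scoped NNReal

/-!
Since `k_γ` has mass one, `1 - K̂_γ(ω) = ∑ k_γ(z) (1 - cos (π ω · z / N))`. The profile is bounded
below by some `a > 0` on a ball of radius `2r`, so the sum dominates `c γ² a` times the sum of
`1 - cos φ`, where `φ(z) = π ω · z / N`, over the lattice points of that ball. A shift `v` with
`γ |v| ≤ r` maps the concentric ball of radius `r`, which holds at least `(r / γ)²` points, into
the larger one, and `1 - cos φ(v) ≤ 2 (1 - cos φ(z)) + 2 (1 - cos φ(z + v))` by additivity of `φ`.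
Averaging over `z` bounds `1 - K̂_γ(ω)` below by a multiple of `1 - cos φ(v)`, and it remains to
choose `v` along the axis on which `ω` is larger, as long as possible without `φ(v)` leaving
`[-π, π]`.
-/

section CosineSums

open Real Finset

lemma one_sub_cos_sub_le (x y : ℝ) :
    1 - cos (x - y) ≤ 2 * (1 - cos x) + 2 * (1 - cos y) := by
  rw [cos_sub]
  nlinarith [sin_sq_add_cos_sq x, sin_sq_add_cos_sq y, sq_nonneg (sin x + sin y),
    sq_nonneg (cos x + cos y - 2)]

lemma card_mul_one_sub_cos_le {G : Type*} [AddRightCancelMonoid G] (φ : G →+ ℝ) {s t : Finset G}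
    {v : G} (hst : s ⊆ t) (hshift : ∀ z ∈ s, z + v ∈ t) :
    #s * (1 - cos (φ v)) ≤ 4 * ∑ z ∈ t, (1 - cos (φ z)) := by
  have hnonneg : ∀ z ∈ t, 0 ≤ 1 - cos (φ z) := fun z _ ↦ sub_nonneg.2 (cos_le_one _)
  have hsum : ∑ z ∈ s, (1 - cos (φ z)) ≤ ∑ z ∈ t, (1 - cos (φ z)) :=
    sum_le_sum_of_subset_of_nonneg hst fun z hz _ ↦ hnonneg z hz
  have hsum_shift : ∑ z ∈ s, (1 - cos (φ (z + v))) ≤ ∑ z ∈ t, (1 - cos (φ z)) := by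
    calc ∑ z ∈ s, (1 - cos (φ (z + v))) = ∑ z ∈ s.map (addRightEmbedding v), (1 - cos (φ z)) :=
          (sum_map s (addRightEmbedding v) fun z ↦ 1 - cos (φ z)).symm
      _ ≤ ∑ z ∈ t, (1 - cos (φ z)) :=
          sum_le_sum_of_subset_of_nonneg (forall_mem_map.2 hshift) fun z hz _ ↦ hnonneg z hz
  calc #s * (1 - cos (φ v)) = ∑ z ∈ s, (1 - cos (φ (z + v) - φ z)) := by
        simp only [map_add, add_sub_cancel_left, sum_const, nsmul_eq_mul]
    _ ≤ ∑ z ∈ s, (2 * (1 - cos (φ (z + v))) + 2 * (1 - cos (φ z))) :=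
        sum_le_sum fun z _ ↦ one_sub_cos_sub_le _ _
    _ = 2 * ∑ z ∈ s, (1 - cos (φ (z + v))) + 2 * ∑ z ∈ s, (1 - cos (φ z)) := by
        rw [sum_add_distrib, mul_sum, mul_sum]
    _ ≤ 4 * ∑ z ∈ t, (1 - cos (φ z)) := by linarith

lemma two_mul_sq_le_one_sub_cos_pi_mul {x : ℝ} (hx : |x| ≤ 1) : 2 * x ^ 2 ≤ 1 - cos (π * x) := by
  have hπx : |π * x| ≤ π := by
    rw [abs_mul, abs_of_pos pi_pos]
    exact mul_le_of_le_one_right pi_pos.le hx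
  have hcos := cos_le_one_sub_mul_cos_sq hπx
  have : 2 / π ^ 2 * (π * x) ^ 2 = 2 * x ^ 2 := by field_simp
  linarith

lemma exists_nat_min_sq_le_one_sub_cos {x R : ℝ} (hx : |x| ≤ 1) (hR : 1 ≤ R) :
    ∃ d : ℕ, d ≤ R ∧ min ((x * R) ^ 2) 1 / 2 ≤ 1 - cos (π * (x * d)) := by
  rcases eq_or_ne x 0 with rfl | hx0
  · exact ⟨0, by simpa using zero_le_one.trans hR, by simp⟩
  have hxpos : 0 < |x| := abs_pos.2 hx0
  -- `⌊t⌋₊` is the largest number `d ≤ R` for which `x * d` stays in `[-1, 1]`.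
  set t := min R |x|⁻¹ with ht
  have ht1 : 1 ≤ t := le_min hR ((one_le_inv₀ hxpos).2 hx)
  have hxt : |x| * t = min |x * R| 1 := by
    rw [ht, mul_min_of_nonneg _ _ hxpos.le, mul_inv_cancel₀ hxpos.ne', abs_mul,
      abs_of_pos (zero_lt_one.trans_le hR)]
  have hfloor_le : (⌊t⌋₊ : ℝ) ≤ t := Nat.floor_le (zero_le_one.trans ht1)
  have hle_floor : t / 2 ≤ ⌊t⌋₊ := (Nat.div_two_lt_floor ht1).le
  refine ⟨⌊t⌋₊, hfloor_le.trans (min_le_left _ _), ?_⟩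
  have hupper : |x * ⌊t⌋₊| ≤ 1 := by
    rw [abs_mul, Nat.abs_cast]
    calc |x| * ⌊t⌋₊ ≤ |x| * t := by gcongr
      _ ≤ 1 := hxt.trans_le (min_le_right _ _)
  have hlower : min |x * R| 1 / 2 ≤ |x * ⌊t⌋₊| := by
    rw [← hxt, abs_mul, Nat.abs_cast, mul_div_assoc]
    gcongr
  calc min ((x * R) ^ 2) 1 / 2 = 2 * (min |x * R| 1 / 2) ^ 2 := by
        rw [← sq_abs (x * R), div_pow]
        rcases le_total |x * R| 1 with h | h
        · rw [min_eq_left h, min_eq_left (pow_le_one₀ (abs_nonneg _) h)]; ring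
        · rw [min_eq_right h, min_eq_right (one_le_pow₀ h)]; norm_num
    _ ≤ 2 * (x * ⌊t⌋₊) ^ 2 := by rw [← sq_abs (x * ⌊t⌋₊)]; gcongr
    _ ≤ 1 - cos (π * (x * ⌊t⌋₊)) := two_mul_sq_le_one_sub_cos_pi_mul hupper

end CosineSums

section LatticeBalls

open Finset

/-- The embedding `p ↦ γ p` of `ℤ²` into `ℝ²`, along which a Kac kernel samples its profile. -/
def scaledPoint (γ : ℝ) : ℤ × ℤ →+ ℝ × ℝ where
  toFun p := (γ * p.1, γ * p.2)
  map_zero' := by simp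
  map_add' p q := by simp [mul_add]

/-- The points `p ∈ ℤ²` for which `γ p` lies in the closed ball of radius `r` around `x`. The ball
is taken in the supremum norm of `ℝ × ℝ`, so that it is a product of two integer intervals. -/
def latticeBall (γ : ℝ) (x : ℝ × ℝ) (r : ℝ) : Finset (ℤ × ℤ) :=
  Icc ⌈(x.1 - r) / γ⌉ ⌊(x.1 + r) / γ⌋ ×ˢ Icc ⌈(x.2 - r) / γ⌉ ⌊(x.2 + r) / γ⌋

lemma norm_scaledPoint_le_iff {γ r : ℝ} (hγ : 0 < γ) {p : ℤ × ℤ} :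
    ‖scaledPoint γ p‖ ≤ r ↔ γ * |(p.1 : ℝ)| ≤ r ∧ γ * |(p.2 : ℝ)| ≤ r := by
  simp [scaledPoint, Prod.norm_def, abs_of_pos hγ]

variable {γ r : ℝ} {x : ℝ × ℝ}

lemma mem_latticeBall (hγ : 0 < γ) {p : ℤ × ℤ} :
    p ∈ latticeBall γ x r ↔ scaledPoint γ p ∈ Metric.closedBall x r := by
  have mem_interval (m : ℤ) (y : ℝ) :
      m ∈ Icc ⌈(y - r) / γ⌉ ⌊(y + r) / γ⌋ ↔ |γ * m - y| ≤ r := by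
    rw [mem_Icc, Int.ceil_le, Int.le_floor, div_le_iff₀ hγ, le_div_iff₀ hγ, abs_le]
    constructor <;> rintro ⟨_, _⟩ <;> constructor <;> linarith
  simp only [latticeBall, mem_product, mem_interval, Metric.mem_closedBall, Prod.dist_eq,
    Real.dist_eq, sup_le_iff, scaledPoint, AddMonoidHom.coe_mk, ZeroHom.coe_mk]

lemma abs_card_Icc_ceil_floor_sub_le {a b : ℝ} (hab : a ≤ b) :
    |(#(Icc ⌈a⌉ ⌊b⌋) : ℝ) - (b - a)| ≤ 1 := by
  have h : ⌈a⌉ ≤ ⌊b⌋ + 1 := Int.ceil_le.2 (by push_cast; linarith [Int.lt_floor_add_one b])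
  have hcard : (#(Icc ⌈a⌉ ⌊b⌋) : ℝ) = ⌊b⌋ + 1 - ⌈a⌉ := by
    exact_mod_cast Int.card_Icc_of_le _ _ h
  rw [hcard, abs_le]
  constructor <;>
    linarith [Int.le_ceil a, Int.ceil_lt_add_one a, Int.floor_le b, Int.lt_floor_add_one b]

lemma abs_card_interval_sub_le (hγ : 0 < γ) (hr : 0 ≤ r) (y : ℝ) :
    |(#(Icc ⌈(y - r) / γ⌉ ⌊(y + r) / γ⌋) : ℝ) - 2 * r / γ| ≤ 1 := by
  have hwidth : (y + r) / γ - (y - r) / γ = 2 * r / γ := by ring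
  rw [← hwidth]
  exact abs_card_Icc_ceil_floor_sub_le (by gcongr; linarith)

lemma card_latticeBall_le (hγ : 0 < γ) (hr : 0 ≤ r) :
    (#(latticeBall γ x r) : ℝ) ≤ (2 * r / γ + 1) ^ 2 := by
  rw [latticeBall, card_product, Nat.cast_mul, sq]
  gcongr <;> linarith [(abs_le.1 (abs_card_interval_sub_le hγ hr x.1)).2,
    (abs_le.1 (abs_card_interval_sub_le hγ hr x.2)).2]

lemma sq_div_le_card_latticeBall (hγ : 0 < γ) (hγr : γ ≤ r) :
    (r / γ) ^ 2 ≤ #(latticeBall γ x r) := by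
  have hr : 0 < r := hγ.trans_le hγr
  have hone : 1 ≤ r / γ := (one_le_div hγ).2 hγr
  have hdouble : 2 * r / γ = 2 * (r / γ) := mul_div_assoc _ _ _
  rw [latticeBall, card_product, Nat.cast_mul, sq]
  gcongr <;> linarith [(abs_le.1 (abs_card_interval_sub_le hγ hr.le x.1)).1,
    (abs_le.1 (abs_card_interval_sub_le hγ hr.le x.2)).1]

lemma latticeBall_subset (hγ : 0 < γ) {R : ℝ} (hrR : r ≤ R) :
    latticeBall γ x r ⊆ latticeBall γ x R := fun _ hp ↦
  (mem_latticeBall hγ).2 (Metric.closedBall_subset_closedBall hrR ((mem_latticeBall hγ).1 hp))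

lemma add_mem_latticeBall (hγ : 0 < γ) {p v : ℤ × ℤ} {δ : ℝ} (hp : p ∈ latticeBall γ x r)
    (hv : ‖scaledPoint γ v‖ ≤ δ) : p + v ∈ latticeBall γ x (r + δ) := by
  rw [mem_latticeBall hγ, mem_closedBall_iff_norm] at hp ⊢
  calc ‖scaledPoint γ (p + v) - x‖ = ‖scaledPoint γ p - x + scaledPoint γ v‖ := by
        rw [map_add, add_sub_right_comm]
    _ ≤ r + δ := norm_add_le_of_le hp hv

end LatticeBalls

section WeightedSums

open Real Finset

variable {f : ℝ × ℝ → ℝ} {γ : ℝ}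

lemma sq_mul_sum_scaledPoint_le {B R : ℝ} (hB : ∀ x, ‖f x‖ ≤ B) (hR : 0 ≤ R)
    (hf_supp : ∀ x, R ≤ ‖x‖ → f x = 0) (hγ : 0 < γ) (hγ1 : γ ≤ 1) (s : Finset (ℤ × ℤ)) :
    γ ^ 2 * ∑ p ∈ s, f (scaledPoint γ p) ≤ B * (2 * R + 1) ^ 2 := by
  have hB0 : 0 ≤ B := (norm_nonneg _).trans (hB 0)
  have hvanish : ∀ p ∈ s, p ∉ s ∩ latticeBall γ 0 R → f (scaledPoint γ p) = 0 := by
    intro p hps hp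
    have hpR : p ∉ latticeBall γ 0 R := fun h ↦ hp (mem_inter.2 ⟨hps, h⟩)
    rw [mem_latticeBall hγ, mem_closedBall_zero_iff, not_le] at hpR
    exact hf_supp _ hpR.le
  calc γ ^ 2 * ∑ p ∈ s, f (scaledPoint γ p)
      = γ ^ 2 * ∑ p ∈ s ∩ latticeBall γ 0 R, f (scaledPoint γ p) := by
        rw [sum_subset inter_subset_left hvanish]
    _ ≤ γ ^ 2 * (#(s ∩ latticeBall γ 0 R) * B) := by
        rw [← nsmul_eq_mul]
        gcongr
        exact sum_le_card_nsmul _ _ _ fun p _ ↦ (le_norm_self _).trans (hB _)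
    _ ≤ γ ^ 2 * ((2 * R / γ + 1) ^ 2 * B) := by
        gcongr
        exact (Nat.cast_le.2 (card_le_card inter_subset_right)).trans (card_latticeBall_le hγ hR)
    _ = B * (2 * R + γ) ^ 2 := by field_simp
    _ ≤ B * (2 * R + 1) ^ 2 := by gcongr

lemma mul_one_sub_cos_le_sq_mul_sum {a r : ℝ} {x : ℝ × ℝ} (hf : 0 ≤ f) (ha : 0 ≤ a)
    (haf : ∀ y ∈ Metric.closedBall x (r + r), a ≤ f y) (hγ : 0 < γ) (hγr : γ ≤ r)
    {s : Finset (ℤ × ℤ)} (hs : latticeBall γ x (r + r) ⊆ s) (φ : ℤ × ℤ →+ ℝ) {v : ℤ × ℤ}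
    (hv : ‖scaledPoint γ v‖ ≤ r) :
    a * r ^ 2 / 4 * (1 - cos (φ v)) ≤ γ ^ 2 * ∑ p ∈ s, f (scaledPoint γ p) * (1 - cos (φ p)) := by
  have hcos (p : ℤ × ℤ) : 0 ≤ 1 - cos (φ p) := sub_nonneg.2 (cos_le_one _)
  have hshift : #(latticeBall γ x r) * (1 - cos (φ v)) ≤
      4 * ∑ p ∈ latticeBall γ x (r + r), (1 - cos (φ p)) :=
    card_mul_one_sub_cos_le φ (latticeBall_subset hγ (by linarith))
      fun p hp ↦ add_mem_latticeBall hγ hp hv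
  calc a * r ^ 2 / 4 * (1 - cos (φ v)) = γ ^ 2 * a / 4 * ((r / γ) ^ 2 * (1 - cos (φ v))) := by
        field_simp
    _ ≤ γ ^ 2 * a / 4 * (#(latticeBall γ x r) * (1 - cos (φ v))) := by
        gcongr
        · exact hcos v
        · exact sq_div_le_card_latticeBall hγ hγr
    _ ≤ γ ^ 2 * a / 4 * (4 * ∑ p ∈ latticeBall γ x (r + r), (1 - cos (φ p))) := by gcongr
    _ = γ ^ 2 * ∑ p ∈ latticeBall γ x (r + r), a * (1 - cos (φ p)) := by rw [← mul_sum]; ring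
    _ ≤ γ ^ 2 * ∑ p ∈ latticeBall γ x (r + r), f (scaledPoint γ p) * (1 - cos (φ p)) := by
        gcongr with p hp
        · exact hcos p
        · exact haf _ ((mem_latticeBall hγ).1 hp)
    _ ≤ γ ^ 2 * ∑ p ∈ s, f (scaledPoint γ p) * (1 - cos (φ p)) := by
        gcongr
        exact fun p _ _ ↦ mul_nonneg (hf _) (hcos p)

end WeightedSums

section Representatives

variable {N : ℕ} [NeZero N]

lemma latRep_eq_valMinAbs (v : ZMod (2 * N)) : latRep N v = v.valMinAbs := by
  rw [latRep, ZMod.valMinAbs_def_pos, Nat.mul_div_cancel_left _ two_pos]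
  push_cast
  simp only [Nat.cast_le]

lemma latRep2_zero : latRep2 N 0 = 0 := by
  simp [latRep2, latRep_eq_valMinAbs]

lemma latRep2_injective : Function.Injective (latRep2 N) := by
  intro z w h
  simpa [latRep2, latRep_eq_valMinAbs, ZMod.valMinAbs_inj, ← Prod.ext_iff] using h

lemma abs_latRep_le (v : ZMod (2 * N)) : |(latRep N v : ℝ)| ≤ N := by
  have := v.natAbs_valMinAbs_le
  rw [Nat.mul_div_cancel_left _ two_pos] at this
  rw [latRep_eq_valMinAbs, ← Int.cast_abs, ← Nat.cast_natAbs]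
  exact_mod_cast this

lemma latRep_intCast {m : ℤ} (hm : |(m : ℝ)| < N) : latRep N (m : ZMod (2 * N)) = m := by
  have hmN : -(N : ℤ) < m ∧ m < N := abs_lt.1 (by exact_mod_cast hm)
  rw [latRep_eq_valMinAbs, ZMod.valMinAbs_spec, Set.mem_Ioc]
  push_cast
  exact ⟨rfl, by omega, by omega⟩

lemma latticeBall_subset_image_latRep2 {γ r : ℝ} {x : ℝ × ℝ} (hγ : 0 < γ)
    (hfit : ‖x‖ + r < γ * N) : latticeBall γ x r ⊆ Finset.univ.image (latRep2 N) := by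
  intro p hp
  have hnorm : ‖scaledPoint γ p‖ ≤ ‖x‖ + r :=
    norm_le_of_mem_closedBall ((mem_latticeBall hγ).1 hp)
  obtain ⟨h₁, h₂⟩ := (norm_scaledPoint_le_iff hγ).1 hnorm
  have hp₁ : |(p.1 : ℝ)| < N := lt_of_mul_lt_mul_left (h₁.trans_lt hfit) hγ.le
  have hp₂ : |(p.2 : ℝ)| < N := lt_of_mul_lt_mul_left (h₂.trans_lt hfit) hγ.le
  exact Finset.mem_image.2
    ⟨(p.1, p.2), Finset.mem_univ _, Prod.ext (latRep_intCast hp₁) (latRep_intCast hp₂)⟩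

end Representatives

section Phase

open Real

/-- The phase `p ↦ π ω · p / N` of the frequency `ω`, whose cosine `kHat` integrates against the
kernel. -/
def phase (N : ℕ) (ω : ℤ × ℤ) : ℤ × ℤ →+ ℝ where
  toFun p := π * (ω.1 * p.1 / N + ω.2 * p.2 / N)
  map_zero' := by simp
  map_add' p q := by simp only [Prod.fst_add, Prod.snd_add, Int.cast_add]; ring

variable {N : ℕ} {γ r : ℝ}

lemma exists_nat_min_sq_le_one_sub_cos_freq (hγ : 0 < γ) (hN : γ ^ 2 * N = 1) (hγr : γ ≤ r)
    {m : ℝ} (hm : |m| ≤ N) :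
    ∃ d : ℕ, γ * d ≤ r ∧ min ((r * (γ * m)) ^ 2) 1 / 2 ≤ 1 - cos (π * (m * d / N)) := by
  have hN0 : (0 : ℝ) < N := N.cast_nonneg.lt_of_ne' (right_ne_zero_of_mul_eq_one hN)
  have hmN : |m / N| ≤ 1 := by rwa [abs_div, Nat.abs_cast, div_le_one hN0]
  obtain ⟨d, hd, hcos⟩ := exists_nat_min_sq_le_one_sub_cos hmN ((one_le_div hγ).2 hγr)
  have hscale : m / N * (r / γ) = r * (γ * m) := by
    have : (N : ℝ)⁻¹ = γ ^ 2 := (eq_inv_of_mul_eq_one_left hN).symm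
    rw [div_eq_mul_inv, this]
    field_simp
  refine ⟨d, by rwa [mul_comm, ← le_div_iff₀ hγ], ?_⟩
  rwa [hscale, div_mul_eq_mul_div] at hcos

lemma sq_div_four_mul_min_le {m n : ℝ} (hnm : |n| ≤ |m|) (hr : 0 ≤ r) (hr1 : r ≤ 1) :
    r ^ 2 / 4 * min (γ ^ 2 * (m ^ 2 + n ^ 2)) 1 ≤ min ((r * (γ * m)) ^ 2) 1 / 2 := by
  have hsq : n ^ 2 ≤ m ^ 2 := sq_le_sq.2 hnm
  have hr2 : r ^ 2 ≤ 1 := pow_le_one₀ hr hr1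
  rw [le_div_iff₀ two_pos]
  refine le_min ?_ ?_
  · calc r ^ 2 / 4 * min (γ ^ 2 * (m ^ 2 + n ^ 2)) 1 * 2
        ≤ r ^ 2 / 4 * (γ ^ 2 * (m ^ 2 + m ^ 2)) * 2 := by
          gcongr
          exact (min_le_left _ _).trans (by gcongr)
      _ = (r * (γ * m)) ^ 2 := by ring
  · calc r ^ 2 / 4 * min (γ ^ 2 * (m ^ 2 + n ^ 2)) 1 * 2 ≤ 1 / 4 * 1 * 2 := by
          gcongr
          exact min_le_right _ _
      _ ≤ 1 := by norm_num

lemma exists_shift_min_le_one_sub_cos_phase (hγ : 0 < γ) (hN : γ ^ 2 * N = 1) (hγr : γ ≤ r)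
    (hr1 : r ≤ 1) {ω : ℤ × ℤ} (hω₁ : |(ω.1 : ℝ)| ≤ N) (hω₂ : |(ω.2 : ℝ)| ≤ N) :
    ∃ v, ‖scaledPoint γ v‖ ≤ r ∧
      r ^ 2 / 4 * min (γ ^ 2 * ((ω.1 : ℝ) ^ 2 + (ω.2 : ℝ) ^ 2)) 1 ≤ 1 - cos (phase N ω v) := by
  have hr : 0 ≤ r := hγ.le.trans hγr
  rcases le_total |(ω.2 : ℝ)| |(ω.1 : ℝ)| with h | h
  · obtain ⟨d, hd, hcos⟩ := exists_nat_min_sq_le_one_sub_cos_freq hγ hN hγr hω₁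
    refine ⟨(d, 0), (norm_scaledPoint_le_iff hγ).2 (by simpa [hr] using hd), ?_⟩
    exact (sq_div_four_mul_min_le h hr hr1).trans (by simpa [phase] using hcos)
  · obtain ⟨d, hd, hcos⟩ := exists_nat_min_sq_le_one_sub_cos_freq hγ hN hγr hω₂
    refine ⟨(0, d), (norm_scaledPoint_le_iff hγ).2 (by simpa [hr] using hd), ?_⟩
    rw [add_comm ((ω.1 : ℝ) ^ 2)]
    exact (sq_div_four_mul_min_le h hr hr1).trans (by simpa [phase] using hcos)

end Phase

section KacKernel

open Real Finset

/-- The Kac kernel `k_γ(z) = c γ² f(γ z)`, `k_γ(0) = 0`, of an arbitrary profile `f`. When `f` is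
not even, `kHat` of this kernel is only the real part of its Fourier transform. -/
def kacKernel (f : ℝ × ℝ → ℝ) (N : ℕ) (c γ : ℝ) (z : Lat N) : ℝ :=
  if z = 0 then 0 else c * γ ^ 2 * f (scaledPoint γ (latRep2 N z))

variable {f : ℝ × ℝ → ℝ} {N : ℕ} [NeZero N] {c γ : ℝ}

lemma sum_kacKernel : ∑ z, kacKernel f N c γ z =
    c * (γ ^ 2 * ∑ p ∈ (univ.erase 0).image (latRep2 N), f (scaledPoint γ p)) := by
  rw [sum_image latRep2_injective.injOn, ← sum_erase univ (a := 0) (by simp [kacKernel]), mul_sum,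
    mul_sum]
  refine sum_congr rfl fun z hz ↦ ?_
  rw [kacKernel, if_neg (ne_of_mem_erase hz), mul_assoc]

lemma sum_kacKernel_sub_kHat (ω : ℤ × ℤ) :
    ∑ z, kacKernel f N c γ z - kHat N (kacKernel f N c γ) ω =
      c * (γ ^ 2 * ∑ p ∈ univ.image (latRep2 N),
        f (scaledPoint γ p) * (1 - cos (phase N ω p))) := by
  rw [sum_image latRep2_injective.injOn, kHat, ← sum_sub_distrib, mul_sum, mul_sum]
  refine sum_congr rfl fun z _ ↦ ?_
  change _ - _ * cos (phase N ω (latRep2 N z)) = _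
  rcases eq_or_ne z 0 with rfl | hz
  · simp [latRep2_zero, kacKernel]
  · rw [kacKernel, if_neg hz]
    ring

lemma inv_le_of_sum_kacKernel_eq_one {B R : ℝ} (hf : 0 ≤ f) (hB : ∀ x, ‖f x‖ ≤ B) (hR : 0 ≤ R)
    (hf_supp : ∀ x, R ≤ ‖x‖ → f x = 0) (hγ : 0 < γ) (hγ1 : γ ≤ 1)
    (hsum : ∑ z, kacKernel f N c γ z = 1) : (B * (2 * R + 1) ^ 2)⁻¹ ≤ c := by
  rw [sum_kacKernel] at hsum
  set m := γ ^ 2 * ∑ p ∈ (univ.erase 0).image (latRep2 N), f (scaledPoint γ p)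
  have hm : 0 < m :=
    lt_of_le_of_ne (mul_nonneg (sq_nonneg γ) (sum_nonneg fun p _ ↦ hf _))
      (right_ne_zero_of_mul_eq_one hsum).symm
  rw [eq_inv_of_mul_eq_one_left hsum]
  exact inv_anti₀ hm (sq_mul_sum_scaledPoint_le hB hR hf_supp hγ hγ1 _)

lemma mul_min_le_one_sub_kHat_kacKernel {a r B R : ℝ} {x : ℝ × ℝ} (hf : 0 ≤ f) (ha : 0 ≤ a)
    (haf : ∀ y ∈ Metric.closedBall x (r + r), a ≤ f y) (hB : ∀ y, ‖f y‖ ≤ B) (hR : 0 ≤ R)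
    (hf_supp : ∀ y, R ≤ ‖y‖ → f y = 0) (hγ : 0 < γ) (hN : γ ^ 2 * N = 1) (hγr : γ ≤ r)
    (hr1 : r ≤ 1) (hfit : ‖x‖ + (r + r) < γ * N) (hsum : ∑ z, kacKernel f N c γ z = 1)
    (z : Lat N) :
    (B * (2 * R + 1) ^ 2)⁻¹ * (a * r ^ 2 / 4 *
        (r ^ 2 / 4 * min (γ ^ 2 * ((latRep N z.1 : ℝ) ^ 2 + (latRep N z.2 : ℝ) ^ 2)) 1)) ≤
      1 - kHat N (kacKernel f N c γ) (latRep2 N z) := by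
  have hc : (B * (2 * R + 1) ^ 2)⁻¹ ≤ c :=
    inv_le_of_sum_kacKernel_eq_one hf hB hR hf_supp hγ (hγr.trans hr1) hsum
  have hB0 : 0 ≤ B := (norm_nonneg _).trans (hB 0)
  have hc0 : 0 ≤ c := le_trans (by positivity) hc
  obtain ⟨v, hv, hphase⟩ := exists_shift_min_le_one_sub_cos_phase hγ hN hγr hr1
    (ω := latRep2 N z) (abs_latRep_le z.1) (abs_latRep_le z.2)
  have hball := mul_one_sub_cos_le_sq_mul_sum hf ha haf hγ hγr
    (latticeBall_subset_image_latRep2 hγ hfit) (phase N (latRep2 N z)) hv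
  calc _ ≤ c * (a * r ^ 2 / 4 * (1 - cos (phase N (latRep2 N z) v))) := by gcongr; exact hphase
    _ ≤ c * (γ ^ 2 * ∑ p ∈ univ.image (latRep2 N),
          f (scaledPoint γ p) * (1 - cos (phase N (latRep2 N z) p))) := by gcongr
    _ = 1 - kHat N (kacKernel f N c γ) (latRep2 N z) := by rw [← sum_kacKernel_sub_kHat, hsum]

end KacKernel

lemma gam_pos (N : ℕ) [NeZero N] : 0 < gam N :=
  Real.sqrt_pos.2 (inv_pos.2 (Nat.cast_pos.2 (NeZero.pos N)))

lemma gam_sq_mul_self (N : ℕ) [NeZero N] : gam N ^ 2 * N = 1 := by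
  rw [gam, Real.sq_sqrt (by positivity), inv_mul_cancel₀ (NeZero.ne _)]

lemma exists_le_on_closedBall {X : Type*} [PseudoMetricSpace X] {f : X → ℝ} {x : X}
    (hf : ContinuousAt f x) (hx : 0 < f x) :
    ∃ a r : ℝ, 0 < a ∧ 0 < r ∧ r ≤ 1 ∧ ∀ y ∈ Metric.closedBall x (r + r), a ≤ f y := by
  obtain ⟨δ, hδ, hfδ⟩ := Metric.nhds_basis_closedBall.eventually_iff.1
    (hf.eventually (lt_mem_nhds (half_lt_self hx)))
  refine ⟨f x / 2, min (δ / 2) 1, half_pos hx, by positivity, min_le_right _ _, fun y hy ↦ ?_⟩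
  have hle : min (δ / 2) 1 + min (δ / 2) 1 ≤ δ := by linarith [min_le_left (δ / 2) 1]
  exact (hfδ (Metric.closedBall_subset_closedBall hle hy)).le

theorem statement12_general {f : ℝ × ℝ → ℝ} (hf_cont : Continuous f)
    (hf_supp : HasCompactSupport f) (hf_nonneg : 0 ≤ f) (hf_ne : f ≠ 0) :
    ∃ cc : ℝ, 0 < cc ∧ ∃ γ₀ : ℝ, 0 < γ₀ ∧ ∀ (N : ℕ) [NeZero N], gam N ≤ γ₀ →
      ∀ c : ℝ, (∑ z : Lat N, kacKernel f N c (gam N) z) = 1 →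
      ∀ z : Lat N,
        cc * min ((gam N) ^ 2 * ((latRep N z.1 : ℝ) ^ 2 + (latRep N z.2 : ℝ) ^ 2)) 1 ≤
          1 - kHat N (kacKernel f N c (gam N)) (latRep2 N z) := by
  obtain ⟨x, hx⟩ := Function.ne_iff.1 hf_ne
  have hfx : 0 < f x := lt_of_le_of_ne (hf_nonneg x) (Ne.symm hx)
  obtain ⟨a, r, ha, hr, hr1, haf⟩ := exists_le_on_closedBall hf_cont.continuousAt hfx
  obtain ⟨B, hB⟩ := hf_cont.bounded_above_of_compact_support hf_supp
  obtain ⟨R, hR, hfR⟩ := hf_supp.exists_pos_le_norm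
  have hB0 : 0 < B := hfx.trans_le ((Real.le_norm_self _).trans (hB x))
  have hD : 0 < ‖x‖ + (r + r) + 1 := by positivity
  refine ⟨(B * (2 * R + 1) ^ 2)⁻¹ * (a * r ^ 2 / 4 * (r ^ 2 / 4)), by positivity,
    min r (‖x‖ + (r + r) + 1)⁻¹, by positivity, fun N _ hγ₀ c hsum z ↦ ?_⟩
  have hfit : ‖x‖ + (r + r) < gam N * N :=
    calc ‖x‖ + (r + r) < ‖x‖ + (r + r) + 1 := lt_add_one _
      _ ≤ (gam N)⁻¹ := (le_inv_comm₀ hD (gam_pos N)).2 (hγ₀.trans (min_le_right _ _))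
      _ = gam N * N := inv_eq_of_mul_eq_one_right (by rw [← mul_assoc, ← sq, gam_sq_mul_self])
  rw [mul_assoc, mul_assoc]
  exact mul_min_le_one_sub_kHat_kacKernel hf_nonneg ha.le haf hB hR.le hfR (gam_pos N)
    (gam_sq_mul_self N) (hγ₀.trans (min_le_left _ _)) hr1 hfit hsum z

lemma norm_le_enorm2 (x : ℝ × ℝ) : ‖x‖ ≤ enorm2 x :=
  max_le (Real.abs_le_sqrt (le_add_of_nonneg_right (sq_nonneg _)))
    (Real.abs_le_sqrt (le_add_of_nonneg_left (sq_nonneg _)))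

lemma KacProfile.hasCompactSupport (𝔎 : KacProfile) : HasCompactSupport 𝔎.f :=
  .intro (isCompact_closedBall 0 3) fun x hx ↦
    𝔎.supp x ((not_le.1 (mem_closedBall_zero_iff.not.1 hx)).trans_le (norm_le_enorm2 x))

lemma KacProfile.ne_zero (𝔎 : KacProfile) : 𝔎.f ≠ 0 := Function.ne_iff.2 𝔎.nontriv

/-- `1 - K̂_γ(ω) ≥ c (γ²|ω|² ∧ 1)`. -/
theorem statement12 (𝔎 : KacProfile) :
    ∃ cc : ℝ, 0 < cc ∧ ∃ γ₀ : ℝ, 0 < γ₀ ∧ ∀ (N : ℕ) [NeZero N], gam N ≤ γ₀ →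
      ∀ c : ℝ, 0 < c → (∑ z : Lat N, kGamma 𝔎 N c (gam N) z) = 1 →
      ∀ z : Lat N,
        cc * min ((gam N)^2 * ((latRep N z.1 : ℝ)^2 + (latRep N z.2 : ℝ)^2)) 1 ≤
          1 - kHat N (kGamma 𝔎 N c (gam N)) (latRep2 N z) := by
  obtain ⟨cc, hcc, γ₀, hγ₀, hbound⟩ := statement12_general 𝔎.smooth.continuous
    𝔎.hasCompactSupport (fun x ↦ (𝔎.mem x).1) 𝔎.ne_zero
  exact ⟨cc, hcc, γ₀, hγ₀, fun N _ hγ c _ ↦ hbound N hγ c⟩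

end IsingKac
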